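/- Let A ∈ ℝ^{n×n} be nonsingular, k ≥ 1, and let b ∈ ℝ^n be a unit norm vector with d(A, b) > k. If r = GMRES(A, b, k) and s = GMRES(Aᵀ, r/‖r‖, k), then ‖r‖ ≤ ‖s‖ ≤ Ψ_k(A). -/

import Mathlib

open Polynomial Matrix

/-- The Euclidean norm of a real vector. -/
noncomputable def euclNorm {ι : Type*} [Fintype ι] (v : ι → ℝ) : ℝ :=
  Real.sqrt (∑ i, v i ^ 2)

/-- The Euclidean norm of a complex vector. -/
noncomputable def euclNormC {ι : Type*} [Fintype ι] (v : ι → ℂ) : ℝ :=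
  Real.sqrt (∑ i, ‖v i‖ ^ 2)

/-- The Euclidean inner product of two real vectors. -/
noncomputable def edot {ι : Type*} [Fintype ι] (u v : ι → ℝ) : ℝ := ∑ i, u i * v i

/-- `p ∈ π_k`: real polynomials of degree at most `k` with value `1` at the origin. -/
def IsPik (k : ℕ) (p : Polynomial ℝ) : Prop := p.natDegree ≤ k ∧ p.eval 0 = 1

/-- `p ∈ π_{k,ℂ}`: complex polynomials of degree at most `k` with value `1` at the origin. -/
def IsPikC (k : ℕ) (p : Polynomial ℂ) : Prop := p.natDegree ≤ k ∧ p.eval 0 = 1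

/-- The `k`-th GMRES residual norm `min_{p ∈ π_k} ‖p(A)v‖`. -/
noncomputable def gmresVal {ι : Type*} [Fintype ι] [DecidableEq ι]
    (A : Matrix ι ι ℝ) (k : ℕ) (v : ι → ℝ) : ℝ :=
  sInf {s : ℝ | ∃ p : Polynomial ℝ, IsPik k p ∧ s = euclNorm ((Polynomial.aeval A p).mulVec v)}

/-- The `k`-th worst-case GMRES approximation `Ψ_k(A) = max_{‖v‖=1} min_{p ∈ π_k} ‖p(A)v‖`. -/
noncomputable def Psi {ι : Type*} [Fintype ι] [DecidableEq ι]
    (A : Matrix ι ι ℝ) (k : ℕ) : ℝ :=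
  sSup {r : ℝ | ∃ v : ι → ℝ, euclNorm v = 1 ∧ r = gmresVal A k v}

/-- `d(A)`: the degree of the minimal polynomial of `A`. -/
noncomputable def dA {ι : Type*} [Fintype ι] [DecidableEq ι] (A : Matrix ι ι ℝ) : ℕ :=
  (minpoly ℝ A).natDegree

/-- `d(A,b)`: the smallest degree of a nonzero polynomial `q` with `q(A)b = 0`. -/
noncomputable def dAb {ι : Type*} [Fintype ι] [DecidableEq ι]
    (A : Matrix ι ι ℝ) (b : ι → ℝ) : ℕ :=
  sInf {d : ℕ | ∃ q : Polynomial ℝ, q ≠ 0 ∧ q.natDegree = d ∧ (Polynomial.aeval A q).mulVec b = 0}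

/-- `r = GMRES(A,b,k)`: `r = p(A)b` for some `p ∈ π_k` minimizing `‖p(A)b‖` over `π_k`. -/
def IsGmresRes {ι : Type*} [Fintype ι] [DecidableEq ι]
    (A : Matrix ι ι ℝ) (k : ℕ) (b r : ι → ℝ) : Prop :=
  ∃ p : Polynomial ℝ, IsPik k p ∧ r = (Polynomial.aeval A p).mulVec b ∧
    ∀ q : Polynomial ℝ, IsPik k q → euclNorm r ≤ euclNorm ((Polynomial.aeval A q).mulVec b)

/-- `p` is the `k`-th GMRES polynomial of `A` and `b`: `p ∈ π_k` minimizes `‖p(A)b‖`. -/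
def IsGmresPoly {ι : Type*} [Fintype ι] [DecidableEq ι]
    (A : Matrix ι ι ℝ) (k : ℕ) (b : ι → ℝ) (p : Polynomial ℝ) : Prop :=
  IsPik k p ∧ ∀ q : Polynomial ℝ, IsPik k q →
    euclNorm ((Polynomial.aeval A p).mulVec b) ≤ euclNorm ((Polynomial.aeval A q).mulVec b)

/-- The Krylov subspace `K_k(A,b) = span{b, Ab, …, A^{k-1}b}`. -/
noncomputable def krylov {ι : Type*} [Fintype ι] [DecidableEq ι]
    (A : Matrix ι ι ℝ) (k : ℕ) (b : ι → ℝ) : Submodule ℝ (ι → ℝ) :=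
  Submodule.span ℝ (Set.range fun i : Fin k => (A ^ (i : ℕ)).mulVec b)

/-- `b` satisfies the cross equality for `A` and step `k`. -/
def CrossEq {ι : Type*} [Fintype ι] [DecidableEq ι]
    (A : Matrix ι ι ℝ) (k : ℕ) (b : ι → ℝ) : Prop :=
  ∀ r s : ι → ℝ, IsGmresRes A k b r → IsGmresRes Aᵀ k ((euclNorm r)⁻¹ • r) s →
    b = (euclNorm s)⁻¹ • s

/-- The Krylov matrix `K(v) = [Av, A²v, …, A^k v]`. -/
noncomputable def Kmat {n : ℕ} (A : Matrix (Fin n) (Fin n) ℝ) (k : ℕ) (v : Fin n → ℝ) :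
    Matrix (Fin n) (Fin k) ℝ :=
  Matrix.of fun i j => (A ^ ((j : ℕ) + 1)).mulVec v i

/-- `γ(v) = (K(v)ᵀK(v))⁻¹ K(v)ᵀ v`. -/
noncomputable def gammaVec {n : ℕ} (A : Matrix (Fin n) (Fin n) ℝ) (k : ℕ) (v : Fin n → ℝ) :
    Fin k → ℝ :=
  ((Kmat A k v)ᵀ * Kmat A k v)⁻¹ *ᵥ ((Kmat A k v)ᵀ *ᵥ v)

/-- `g(v) = min_{c ∈ ℝ^k} ‖v - K(v)c‖²`. -/
noncomputable def gFun {n : ℕ} (A : Matrix (Fin n) (Fin n) ℝ) (k : ℕ) (v : Fin n → ℝ) : ℝ :=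
  sInf {s : ℝ | ∃ c : Fin k → ℝ, s = euclNorm (v - Kmat A k v *ᵥ c) ^ 2}

/-- `p(z; c) = 1 - ∑_{j=1}^k c_j z^j`. -/
noncomputable def pPoly {k : ℕ} (c : Fin k → ℝ) : Polynomial ℝ :=
  1 - ∑ j : Fin k, Polynomial.C (c j) * Polynomial.X ^ ((j : ℕ) + 1)

/-- `f(c,v) = ‖p(A;c)v‖²`. -/
noncomputable def fFun {n k : ℕ} (A : Matrix (Fin n) (Fin n) ℝ) (c : Fin k → ℝ)
    (v : Fin n → ℝ) : ℝ :=
  euclNorm ((Polynomial.aeval A (pPoly c)).mulVec v) ^ 2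

/-- `F(c,v) = f(c,v)/(vᵀv)`. -/
noncomputable def FFun {n k : ℕ} (A : Matrix (Fin n) (Fin n) ℝ) (c : Fin k → ℝ)
    (v : Fin n → ℝ) : ℝ :=
  fFun A c v / edot v v

/-- The Toh matrix `A(ω, ε)`. -/
noncomputable def tohMatrix (ω ε : ℝ) : Matrix (Fin 4) (Fin 4) ℝ :=
  !![1, ε, 0, 0; 0, -1, ω / ε, 0; 0, 0, 1, ε; 0, 0, 0, -1]

/-- `p` is a `k`-th worst-case GMRES polynomial of `A`. -/
def IsWCPoly {ι : Type*} [Fintype ι] [DecidableEq ι]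
    (A : Matrix ι ι ℝ) (k : ℕ) (p : Polynomial ℝ) : Prop :=
  IsPik k p ∧ ∃ b : ι → ℝ, euclNorm b = 1 ∧
    (∀ q : Polynomial ℝ, IsPik k q →
      euclNorm ((Polynomial.aeval A p).mulVec b) ≤ euclNorm ((Polynomial.aeval A q).mulVec b)) ∧
    euclNorm ((Polynomial.aeval A p).mulVec b) = Psi A k

/-- The spectral (Euclidean operator) norm of a real matrix. -/
noncomputable def specNorm {ι : Type*} [Fintype ι] (M : Matrix ι ι ℝ) : ℝ :=
  sSup {r : ℝ | ∃ v : ι → ℝ, euclNorm v = 1 ∧ r = euclNorm (M *ᵥ v)}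

/-- The `k`-th ideal GMRES approximation `φ_k(A) = min_{p ∈ π_k} ‖p(A)‖`. -/
noncomputable def phiIdeal {ι : Type*} [Fintype ι] [DecidableEq ι]
    (A : Matrix ι ι ℝ) (k : ℕ) : ℝ :=
  sInf {r : ℝ | ∃ p : Polynomial ℝ, IsPik k p ∧ r = specNorm (Polynomial.aeval A p)}

/-- Complexification of a real matrix. -/
noncomputable def matC {ι : Type*} (A : Matrix ι ι ℝ) : Matrix ι ι ℂ :=
  A.map fun x => (x : ℂ)

/-- Complexification of a real vector. -/
noncomputable def vecC {ι : Type*} (b : ι → ℝ) : ι → ℂ := fun i => (b i : ℂ)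

/-- `Ψ_{k,ℂ,ℝ}(A)`: complex polynomials, real initial vectors. -/
noncomputable def PsiCR {ι : Type*} [Fintype ι] [DecidableEq ι]
    (A : Matrix ι ι ℝ) (k : ℕ) : ℝ :=
  sSup {r : ℝ | ∃ b : ι → ℝ, euclNorm b = 1 ∧
    r = sInf {s : ℝ | ∃ p : Polynomial ℂ, IsPikC k p ∧
      s = euclNormC ((Polynomial.aeval (matC A) p).mulVec (vecC b))}}

/-- `Ψ_{k,ℂ,ℂ}(A)`: complex polynomials, complex initial vectors. -/
noncomputable def PsiCC {ι : Type*} [Fintype ι] [DecidableEq ι]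
    (A : Matrix ι ι ℝ) (k : ℕ) : ℝ :=
  sSup {r : ℝ | ∃ b : ι → ℂ, euclNormC b = 1 ∧
    r = sInf {s : ℝ | ∃ p : Polynomial ℂ, IsPikC k p ∧
      s = euclNormC ((Polynomial.aeval (matC A) p).mulVec b)}}

/-- `Ψ_{k,ℝ,ℂ}(A)`: real polynomials, complex initial vectors. -/
noncomputable def PsiRC {ι : Type*} [Fintype ι] [DecidableEq ι]
    (A : Matrix ι ι ℝ) (k : ℕ) : ℝ :=
  sSup {r : ℝ | ∃ b : ι → ℂ, euclNormC b = 1 ∧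
    r = sInf {s : ℝ | ∃ p : Polynomial ℝ, IsPik k p ∧
      s = euclNormC ((Polynomial.aeval (matC A) (p.map (algebraMap ℝ ℂ))).mulVec b)}}

/-- `φ_{k,ℝ,ℝ}(A)`. -/
noncomputable def phiRR {ι : Type*} [Fintype ι] [DecidableEq ι]
    (A : Matrix ι ι ℝ) (k : ℕ) : ℝ :=
  sInf {r : ℝ | ∃ p : Polynomial ℝ, IsPik k p ∧
    r = sSup {s : ℝ | ∃ b : ι → ℝ, euclNorm b = 1 ∧
      s = euclNorm ((Polynomial.aeval A p).mulVec b)}}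

/-- `φ_{k,ℂ,ℝ}(A)`. -/
noncomputable def phiCR {ι : Type*} [Fintype ι] [DecidableEq ι]
    (A : Matrix ι ι ℝ) (k : ℕ) : ℝ :=
  sInf {r : ℝ | ∃ p : Polynomial ℂ, IsPikC k p ∧
    r = sSup {s : ℝ | ∃ b : ι → ℝ, euclNorm b = 1 ∧
      s = euclNormC ((Polynomial.aeval (matC A) p).mulVec (vecC b))}}

/-- `φ_{k,ℝ,ℂ}(A)`. -/
noncomputable def phiRC {ι : Type*} [Fintype ι] [DecidableEq ι]
    (A : Matrix ι ι ℝ) (k : ℕ) : ℝ :=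
  sInf {r : ℝ | ∃ p : Polynomial ℝ, IsPik k p ∧
    r = sSup {s : ℝ | ∃ b : ι → ℂ, euclNormC b = 1 ∧
      s = euclNormC ((Polynomial.aeval (matC A) (p.map (algebraMap ℝ ℂ))).mulVec b)}}

/-- `φ_{k,ℂ,ℂ}(A)`. -/
noncomputable def phiCC {ι : Type*} [Fintype ι] [DecidableEq ι]
    (A : Matrix ι ι ℝ) (k : ℕ) : ℝ :=
  sInf {r : ℝ | ∃ p : Polynomial ℂ, IsPikC k p ∧
    r = sSup {s : ℝ | ∃ b : ι → ℂ, euclNormC b = 1 ∧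
      s = euclNormC ((Polynomial.aeval (matC A) p).mulVec b)}}

theorem euclNorm_nonneg' {n : ℕ} (v : Fin n → ℝ) : 0 ≤ euclNorm v := Real.sqrt_nonneg _

theorem euclNorm_sq' {n : ℕ} (v : Fin n → ℝ) : euclNorm v ^ 2 = v ⬝ᵥ v := by
  unfold euclNorm
  rw [Real.sq_sqrt (Finset.sum_nonneg fun i _ => sq_nonneg _)]
  simp [dotProduct, sq]

theorem dot_le_euclNorm {n : ℕ} (u v : Fin n → ℝ) : u ⬝ᵥ v ≤ euclNorm u * euclNorm v :=
  Real.sum_mul_le_sqrt_mul_sqrt _ _ _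

theorem euclNorm_unit {n : ℕ} (v : Fin n → ℝ) (h : euclNorm v ≠ 0) :
    euclNorm ((euclNorm v)⁻¹ • v) = 1 := by
  have h1 : euclNorm ((euclNorm v)⁻¹ • v) ^ 2 = 1 := by
    rw [euclNorm_sq', smul_dotProduct, dotProduct_smul, ← euclNorm_sq']
    simp only [smul_eq_mul]
    field_simp
  have h2 := euclNorm_nonneg' ((euclNorm v)⁻¹ • v)
  nlinarith

theorem aeval_transpose' {n : ℕ} (A : Matrix (Fin n) (Fin n) ℝ) (q : Polynomial ℝ) :
    (Polynomial.aeval A q)ᵀ = Polynomial.aeval Aᵀ q := by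
  induction q using Polynomial.induction_on' with
  | add p q hp hq => simp [hp, hq]
  | monomial m a =>
    rw [Polynomial.aeval_monomial, Polynomial.aeval_monomial, ← Algebra.smul_def,
      ← Algebra.smul_def, Matrix.transpose_smul, Matrix.transpose_pow]

theorem gmres_orth {n : ℕ} (A : Matrix (Fin n) (Fin n) ℝ) (k : ℕ) (b r : Fin n → ℝ)
    (hr : IsGmresRes A k b r) (q : Polynomial ℝ) (hq : IsPik k q) :
    r ⬝ᵥ ((Polynomial.aeval A q) *ᵥ b) = euclNorm r ^ 2 := by
  obtain ⟨p, hp, hrp, hmin⟩ := hr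
  set w := (Polynomial.aeval A q) *ᵥ b with hw
  have key : ∀ t : ℝ, 0 ≤ 2 * t * (r ⬝ᵥ (w - r)) + t ^ 2 * ((w - r) ⬝ᵥ (w - r)) := by
    intro t
    have hpik : IsPik k (p + Polynomial.C t * (q - p)) := by
      refine ⟨?_, ?_⟩
      · refine (Polynomial.natDegree_add_le _ _).trans (max_le hp.1 ?_)
        refine (Polynomial.natDegree_C_mul_le _ _).trans ?_
        exact (Polynomial.natDegree_sub_le _ _).trans (max_le hq.1 hp.1)
      · simp [hp.2, hq.2]
    have h := hmin _ hpik
    have e : (Polynomial.aeval A (p + Polynomial.C t * (q - p))) *ᵥ b = r + t • (w - r) := by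
      rw [hrp, hw, map_add, map_mul, map_sub, Polynomial.aeval_C, ← Algebra.smul_def,
        Matrix.add_mulVec, Matrix.smul_mulVec, Matrix.sub_mulVec]
    rw [e] at h
    have h2 := pow_le_pow_left₀ (euclNorm_nonneg' r) h 2
    rw [euclNorm_sq', euclNorm_sq'] at h2
    simp only [add_dotProduct, dotProduct_add, smul_dotProduct, dotProduct_smul,
      smul_eq_mul] at h2
    rw [dotProduct_comm (w - r) r] at h2
    nlinarith
  have hz : r ⬝ᵥ (w - r) = 0 := by
    generalize r ⬝ᵥ (w - r) = x at key
    have hy : 0 ≤ (w - r) ⬝ᵥ (w - r) := by rw [← euclNorm_sq']; positivity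
    generalize (w - r) ⬝ᵥ (w - r) = y at key hy
    have h := key (-x / (y + 1))
    have hy1 : 0 < y + 1 := by linarith
    have e : 2 * (-x / (y + 1)) * x + (-x / (y + 1)) ^ 2 * y
        = -(x ^ 2 * (y + 2)) / (y + 1) ^ 2 := by
      field_simp
      ring
    rw [e, le_div_iff₀ (by positivity)] at h
    have : x ^ 2 = 0 := by nlinarith [sq_nonneg x, mul_nonneg (sq_nonneg x) hy]
    simpa using this
  rw [dotProduct_sub] at hz
  rw [euclNorm_sq']
  linarith

/-- The key inequality: moving from a residual of `A` to any polynomial in `Aᵀ`. -/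
theorem gmres_cross_le {n : ℕ} (A : Matrix (Fin n) (Fin n) ℝ) (k : ℕ) (b r : Fin n → ℝ)
    (hb : euclNorm b = 1) (hr : IsGmresRes A k b r) (hr0 : euclNorm r ≠ 0)
    (q : Polynomial ℝ) (hq : IsPik k q) :
    euclNorm r ≤ euclNorm ((Polynomial.aeval Aᵀ q) *ᵥ ((euclNorm r)⁻¹ • r)) := by
  have h := dot_le_euclNorm ((Polynomial.aeval Aᵀ q) *ᵥ ((euclNorm r)⁻¹ • r)) b
  have e : ((Polynomial.aeval Aᵀ q) *ᵥ ((euclNorm r)⁻¹ • r)) ⬝ᵥ b = euclNorm r := by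
    rw [← aeval_transpose', Matrix.mulVec_transpose, ← Matrix.dotProduct_mulVec,
      smul_dotProduct, gmres_orth A k b r hr q hq, smul_eq_mul]
    field_simp
  rw [e, hb, mul_one] at h
  exact h

theorem euclNorm_zero' {n : ℕ} : euclNorm (0 : Fin n → ℝ) = 0 := by
  simp [euclNorm]

theorem gmresVal_nonneg' {n : ℕ} (A : Matrix (Fin n) (Fin n) ℝ) (k : ℕ) (v : Fin n → ℝ) :
    0 ≤ gmresVal A k v := by
  apply Real.sInf_nonneg
  rintro _ ⟨p, _, rfl⟩
  exact euclNorm_nonneg' _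

theorem gmresVal_le_Psi {n : ℕ} (A : Matrix (Fin n) (Fin n) ℝ) (k : ℕ) (v : Fin n → ℝ)
    (hv : euclNorm v = 1) : gmresVal A k v ≤ Psi A k := by
  refine le_csSup ⟨1, ?_⟩ ⟨v, hv, rfl⟩
  rintro _ ⟨u, hu, rfl⟩
  refine csInf_le ⟨0, ?_⟩ ⟨1, ⟨by simp, by simp⟩, by simp [hu]⟩
  rintro _ ⟨p, _, rfl⟩
  exact euclNorm_nonneg' _

/-- For a unit norm `b` with `d(A,b) > k`, `r = GMRES(A,b,k)` and
`s = GMRES(Aᵀ, r/‖r‖, k)`, one has `‖r‖ ≤ ‖s‖ ≤ Ψ_k(A)`. -/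
theorem cross_iteration_nondecreasing {n : ℕ} (A : Matrix (Fin n) (Fin n) ℝ)
    (hA : IsUnit A) (k : ℕ) (hk : 1 ≤ k)
    (b : Fin n → ℝ) (hb : euclNorm b = 1) (hd : k < dAb A b)
    (r s : Fin n → ℝ) (hr : IsGmresRes A k b r)
    (hs : IsGmresRes Aᵀ k ((euclNorm r)⁻¹ • r) s) :
    euclNorm r ≤ euclNorm s ∧ euclNorm s ≤ Psi A k := by
  by_cases hr0 : euclNorm r = 0
  · have hs0 : euclNorm s = 0 := by
      obtain ⟨q, _, hsq, _⟩ := hs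
      rw [hsq, hr0, _root_.inv_zero, zero_smul, Matrix.mulVec_zero, euclNorm_zero']
    rw [hr0, hs0]
    exact ⟨le_rfl, (gmresVal_nonneg' A k b).trans (gmresVal_le_Psi A k b hb)⟩
  · constructor
    · obtain ⟨q, hq, hsq, _⟩ := hs
      rw [hsq]
      exact gmres_cross_le A k b r hb hr hr0 q hq
    · by_cases hs0 : euclNorm s = 0
      · rw [hs0]
        exact (gmresVal_nonneg' A k b).trans (gmresVal_le_Psi A k b hb)
      · refine le_trans ?_ (gmresVal_le_Psi A k _ (euclNorm_unit s hs0))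
        refine le_csInf ⟨_, 1, ⟨by simp, by simp⟩, rfl⟩ ?_
        rintro _ ⟨q, hq, rfl⟩
        have h := gmres_cross_le Aᵀ k _ s (euclNorm_unit r hr0) hs hs0 q hq
        rwa [Matrix.transpose_transpose] at h
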